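/- There exist a constant c > 0 and n₀ such that for all n ≥ n₀, the number of sumsets that lie in ℋ'ₙ satisfies |𝒮ₙ ∩ ℋ'ₙ| ≤ 2^(2^(n−1) − c·2ⁿ). -/

import Mathlib

open Pointwise

/-- `V n` is the vector space `F₂ⁿ`. -/
abbrev V (n : ℕ) : Type := Fin n → ZMod 2

/-- `𝒮ₙ`: the family of sumsets `A + A` for `A ⊆ F₂ⁿ`. -/
def sumsets (n : ℕ) : Finset (Finset (V n)) :=
  Finset.image (fun A : Finset (V n) => A + A) Finset.univ

/-- `v^⊥ = {x : ⟨x, v⟩ = 0}`. -/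
def perp {n : ℕ} (v : V n) : Finset (V n) :=
  Finset.univ.filter (fun x => ∑ i, x i * v i = 0)

/-- `ℋ'ₙ`: subsets of `F₂ⁿ` containing the full complement of a co-dimension 1
linear subspace. -/
def Hfam' (n : ℕ) : Finset (Finset (V n)) :=
  Finset.univ.filter (fun S => ∃ v : V n, v ≠ 0 ∧ Finset.univ \ perp v ⊆ S)


lemma greedy_step {G : Type*} [AddCommGroup G] [DecidableEq G] (P X U : Finset G)
    (hU : 2 * U.card < X.card) (hP : P.Nonempty) :
    ∃ q ∈ X, 2 * ((P.image (fun p => p + q)) ∩ U).card ≤ P.card := by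
  by_contra! h
  have h1 : ∑ q ∈ X, ((P.image (fun p => p + q)) ∩ U).card ≤ P.card * U.card := by
    have e : ∀ q ∈ X, ((P.image (fun p => p + q)) ∩ U).card ≤
        ∑ p ∈ P, if p + q ∈ U then 1 else 0 := by
      intro q _
      rw [← Finset.card_filter]
      refine le_trans (Finset.card_le_card ?_)
        (Finset.card_image_le (f := fun p => p + q) (s := P.filter (fun p => p + q ∈ U)))
      intro x hx
      simp only [Finset.mem_inter, Finset.mem_image, Finset.mem_filter] at hx ⊢
      obtain ⟨⟨p, hp, rfl⟩, hx⟩ := hx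
      exact ⟨p, ⟨hp, hx⟩, rfl⟩
    refine (Finset.sum_le_sum e).trans ?_
    rw [Finset.sum_comm]
    refine (Finset.sum_le_card_nsmul P _ U.card ?_).trans (by simp)
    intro p _
    rw [← Finset.card_filter]
    refine Finset.card_le_card_of_injOn (fun q => p + q) ?_ ?_
    · intro q hq
      simpa using (Finset.mem_filter.1 hq).2
    · intro a _ b _ hab
      exact add_left_cancel hab
  have h2 : X.card * P.card ≤ 2 * ∑ q ∈ X, ((P.image (fun p => p + q)) ∩ U).card := by
    rw [Finset.mul_sum]
    have := Finset.card_nsmul_le_sum X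
      (fun q => 2 * ((P.image (fun p => p + q)) ∩ U).card) P.card (fun q hq => (h q hq).le)
    simpa using this
  have h3 := hP.card_pos
  nlinarith

lemma greedy {G : Type*} [AddCommGroup G] [DecidableEq G] (P X : Finset G)
    (hP : P.Nonempty) (t : ℕ) :
    ∃ Q ⊆ X, Q.card ≤ t ∧ (X.card ≤ 2 * (P + Q).card ∨ t * P.card ≤ 2 * (P + Q).card) := by
  induction t with
  | zero => exact ⟨∅, by simp, by simp, by simp⟩
  | succ t ih =>
    obtain ⟨Q, hQX, hQ, h⟩ := ih
    by_cases hc : X.card ≤ 2 * (P + Q).card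
    · exact ⟨Q, hQX, by omega, Or.inl hc⟩
    have h := h.resolve_left hc
    obtain ⟨q, hq, hq2⟩ := greedy_step P X (P + Q) (by omega) hP
    refine ⟨insert q Q, Finset.insert_subset hq hQX,
      (Finset.card_insert_le _ _).trans (by omega), Or.inr ?_⟩
    have hsub : (P.image (fun p => p + q)) ∪ (P + Q) ⊆ P + insert q Q := by
      apply Finset.union_subset
      · intro x hx
        obtain ⟨p, hp, rfl⟩ := Finset.mem_image.1 hx
        exact Finset.add_mem_add hp (Finset.mem_insert_self _ _)
      · exact Finset.add_subset_add_left (Finset.subset_insert _ _)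
    have h1 := Finset.card_le_card hsub
    have h2 := Finset.card_union_add_card_inter (P.image (fun p => p + q)) (P + Q)
    have h3 : (P.image (fun p => p + q)).card = P.card :=
      Finset.card_image_of_injective _ (add_left_injective q)
    rw [Nat.succ_mul]
    omega

/-- large sets contain small subsets with large sumset -/
lemma small_sub_exists {G : Type*} [AddCommGroup G] [DecidableEq G] (X : Finset G) (m t k : ℕ)
    (hm : 0 < m) (hX : m * t ≤ X.card) (hmX : m ≤ X.card) (hk : m + t ≤ k) (hkX : k ≤ X.card) :
    ∃ Z ⊆ X, Z.card = k ∧ m * t ≤ 2 * (Z + Z).card := by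
  obtain ⟨P, hPX, hP⟩ := Finset.exists_subset_card_eq hmX
  obtain ⟨Q, hQX, hQ, h⟩ := greedy P X (Finset.card_pos.1 (by omega)) t
  have hc : (P ∪ Q).card ≤ k := (Finset.card_union_le _ _).trans (by omega)
  obtain ⟨Z, hZ1, hZ2, hZ3⟩ :=
    Finset.exists_subsuperset_card_eq (Finset.union_subset hPX hQX) hc hkX
  refine ⟨Z, hZ2, hZ3, ?_⟩
  have h1 : P + Q ⊆ Z + Z := Finset.add_subset_add
    (Finset.subset_union_left.trans hZ1) (Finset.subset_union_right.trans hZ1)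
  have h2 := Finset.card_le_card h1
  rw [hP, mul_comm t m] at h
  omega

lemma small_count {G : Type*} [Fintype G] [DecidableEq G] (M : ℕ)
    (hG : Fintype.card G = 32 * M) :
    (Finset.univ.filter (fun A : Finset G => A.card ≤ M)).card ≤ 2 ^ (7 * M) := by
  have h := Finset.sum_pow_mul_eq_add_pow (1 : ℕ) 16 (Finset.univ : Finset G)
  rw [Finset.powerset_univ, Finset.card_univ, hG] at h
  have h1 : (Finset.univ.filter (fun A : Finset G => A.card ≤ M)).card * 16 ^ (31 * M) ≤
      17 ^ (32 * M) := by
    calc _ = ∑ A ∈ Finset.univ.filter (fun A : Finset G => A.card ≤ M), 16 ^ (31 * M) := by simp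
      _ ≤ ∑ A ∈ Finset.univ.filter (fun A : Finset G => A.card ≤ M),
          1 ^ A.card * 16 ^ (32 * M - A.card) := by
        apply Finset.sum_le_sum
        intro A hA
        have := (Finset.mem_filter.1 hA).2
        rw [one_pow, one_mul]
        exact Nat.pow_le_pow_right (by norm_num) (by omega)
      _ ≤ _ := Finset.sum_le_sum_of_subset (Finset.filter_subset _ _)
      _ = _ := h
  have h2 : (17 : ℕ) ^ (32 * M) ≤ 2 ^ (7 * M) * 16 ^ (31 * M) := by
    rw [pow_mul, pow_mul, pow_mul, ← mul_pow]
    exact Nat.pow_le_pow_left (by norm_num) M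
  exact Nat.le_of_mul_le_mul_right (h1.trans h2) (by positivity)

lemma z2 (a : ZMod 2) : a = 0 ∨ a = 1 := by
  revert a; decide

lemma add_mem_perp {n : ℕ} {v x y : V n} (h : x ∈ perp v ↔ y ∈ perp v) : x + y ∈ perp v := by
  simp only [perp, Finset.mem_filter, Finset.mem_univ, true_and, Pi.add_apply, add_mul,
    Finset.sum_add_distrib] at *
  rcases z2 (∑ i, x i * v i) with h1 | h1 <;> rcases z2 (∑ i, y i * v i) with h2 | h2 <;>
    simp only [h1, h2] at h ⊢ <;> first | decide | (exfalso; revert h; decide)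

lemma card_perp {n : ℕ} {v : V n} (hv : v ≠ 0) : 2 * (perp v).card ≤ 2 ^ n := by
  obtain ⟨i, hi⟩ := Function.ne_iff.1 hv
  have hi1 : v i = 1 := (z2 (v i)).resolve_left hi
  have h : (perp v).card ≤ (perp v)ᶜ.card := by
    refine Finset.card_le_card_of_injOn (fun x => x + Pi.single i 1) ?_ ?_
    · intro x hx
      have hx : ∑ j, x j * v j = 0 := by simpa [perp] using hx
      have : ∑ j, (Pi.single i 1 : V n) j * v j = 1 := by
        simp [Pi.single_apply, hi1]
      simp [perp, add_mul, Finset.sum_add_distrib, hx, this]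
    · intro a _ b _ hab
      exact add_right_cancel hab
  rw [Finset.card_compl] at h
  have : Fintype.card (V n) = 2 ^ n := by simp [ZMod.card]
  omega

lemma exists_half {n : ℕ} (v : V n) (A : Finset (V n)) :
    ∃ X ⊆ A, A.card ≤ 2 * X.card ∧ X + X ⊆ perp v := by
  have h := Finset.card_filter_add_card_filter_not (s := A) (fun x => x ∈ perp v)
  by_cases hc : A.card ≤ 2 * (A.filter (fun x => x ∈ perp v)).card
  · refine ⟨_, Finset.filter_subset _ _, hc, ?_⟩
    intro z hz
    obtain ⟨x, hx, y, hy, rfl⟩ := Finset.mem_add.1 hz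
    exact add_mem_perp (iff_of_true (Finset.mem_filter.1 hx).2 (Finset.mem_filter.1 hy).2)
  · refine ⟨A.filter (fun x => ¬ x ∈ perp v), Finset.filter_subset _ _, by omega, ?_⟩
    intro z hz
    obtain ⟨x, hx, y, hy, rfl⟩ := Finset.mem_add.1 hz
    exact add_mem_perp (iff_of_false (Finset.mem_filter.1 hx).2 (Finset.mem_filter.1 hy).2)

lemma arith_q (r : ℕ) : 2 * (r + 50) + 1 ≤ 2 ^ (r + 36) := by
  induction r with
  | zero => norm_num
  | succ r ih =>
    have : 2 ^ (r + 1 + 36) = 2 * 2 ^ (r + 36) := by ring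
    omega

lemma arith_n (n : ℕ) (hn : 100 ≤ n) : n ≤ 2 ^ (n / 2 - 14) := by
  have := arith_q (n / 2 - 50)
  have e : n / 2 - 50 + 36 = n / 2 - 14 := by omega
  rw [e] at this
  omega

lemma cover (n : ℕ) (hn : 100 ≤ n) (k : ℕ) (hk : k = 2 ^ (n / 2) + 2 ^ (n - 6 - n / 2))
    (hkX : k ≤ 2 ^ (n - 6)) :
    sumsets n ∩ Hfam' n ⊆
      (Finset.univ.filter (fun A : Finset (V n) => A.card ≤ 2 ^ (n - 5))).image
        (fun A => A + A) ∪
      ((Finset.univ : Finset (V n)) ×ˢ Finset.powersetCard k (Finset.univ : Finset (V n))).biUnion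
        (fun p => if (perp p.1 \ (p.2 + p.2)).card ≤ 2 ^ (n - 1) - 2 ^ (n - 7) then
          (perp p.1 \ (p.2 + p.2)).powerset.image
            (fun R => ((Finset.univ \ perp p.1) ∪ (p.2 + p.2)) ∪ R) else ∅) := by
  intro S hS
  obtain ⟨hS1, hS2⟩ := Finset.mem_inter.1 hS
  obtain ⟨A, -, rfl⟩ := Finset.mem_image.1 hS1
  obtain ⟨v, hv, hvS⟩ := (Finset.mem_filter.1 hS2).2
  rw [Finset.mem_union]
  by_cases hA : A.card ≤ 2 ^ (n - 5)
  · left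
    exact Finset.mem_image.2 ⟨A, by simpa using hA, rfl⟩
  right
  obtain ⟨X, hXA, hX, hXp⟩ := exists_half v A
  have e5 : 2 ^ (n - 5) = 2 * 2 ^ (n - 6) := by
    rw [← pow_succ']; congr 1; omega
  have e6 : 2 ^ (n - 6) = 2 * 2 ^ (n - 7) := by
    rw [← pow_succ']; congr 1; omega
  have e1 : 2 ^ n = 2 * 2 ^ (n - 1) := by
    rw [← pow_succ']; congr 1; omega
  have emt : 2 ^ (n / 2) * 2 ^ (n - 6 - n / 2) = 2 ^ (n - 6) := by
    rw [← pow_add]; congr 1; omega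
  have hmk : 2 ^ (n / 2) ≤ k := hk ▸ Nat.le_add_right _ _
  obtain ⟨Z, hZX, hZ, hZZ⟩ := small_sub_exists X (2 ^ (n / 2)) (2 ^ (n - 6 - n / 2)) k (by positivity)
    (by omega) (by omega) (by omega) (by omega)
  have hZp : Z + Z ⊆ perp v := (Finset.add_subset_add hZX hZX).trans hXp
  have hZA : Z + Z ⊆ A + A := Finset.add_subset_add (hZX.trans hXA) (hZX.trans hXA)
  rw [Finset.mem_biUnion]
  refine ⟨(v, Z), by simp [Finset.mem_powersetCard, hZ], ?_⟩
  have hcard : (perp v \ (Z + Z)).card ≤ 2 ^ (n - 1) - 2 ^ (n - 7) := by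
    rw [Finset.card_sdiff_of_subset hZp]
    have := card_perp hv
    omega
  simp only [hcard, if_true]
  refine Finset.mem_image.2 ⟨(A + A) ∩ (perp v \ (Z + Z)), ?_, ?_⟩
  · exact Finset.mem_powerset.2 Finset.inter_subset_right
  · ext x
    have h1 := @hvS x
    have h2 := @hZA x
    simp only [Finset.mem_union, Finset.mem_inter, Finset.mem_sdiff, Finset.mem_univ,
      true_and] at h1 h2 ⊢
    tauto

lemma nat_bound (n : ℕ) (hn : 100 ≤ n) :
    (sumsets n ∩ Hfam' n).card ≤ 2 ^ (2 ^ (n - 1) - 2 ^ (n - 9)) := by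
  obtain ⟨k, hk⟩ : ∃ k, k = 2 ^ (n / 2) + 2 ^ (n - 6 - n / 2) := ⟨_, rfl⟩
  have hcardV : Fintype.card (V n) = 2 ^ n := by simp [ZMod.card]
  have hN := arith_n n hn
  have hm : n * 2 ^ (n / 2) ≤ 2 ^ (n - 10) := by
    calc _ ≤ 2 ^ (n / 2 - 14) * 2 ^ (n / 2) := Nat.mul_le_mul_right _ hN
      _ = 2 ^ (n / 2 - 14 + n / 2) := by rw [pow_add]
      _ ≤ _ := Nat.pow_le_pow_right (by norm_num) (by omega)
  have ht : n * 2 ^ (n - 6 - n / 2) ≤ 2 ^ (n - 10) := by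
    calc _ ≤ 2 ^ (n / 2 - 14) * 2 ^ (n - 6 - n / 2) := Nat.mul_le_mul_right _ hN
      _ = 2 ^ (n / 2 - 14 + (n - 6 - n / 2)) := by rw [pow_add]
      _ ≤ _ := Nat.pow_le_pow_right (by norm_num) (by omega)
  have e9 : 2 ^ (n - 9) = 2 * 2 ^ (n - 10) := by rw [← pow_succ']; congr 1; omega
  have e8 : 2 ^ (n - 8) = 2 * 2 ^ (n - 9) := by rw [← pow_succ']; congr 1; omega
  have e7 : 2 ^ (n - 7) = 2 * 2 ^ (n - 8) := by rw [← pow_succ']; congr 1; omega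
  have e6 : 2 ^ (n - 6) = 2 * 2 ^ (n - 7) := by rw [← pow_succ']; congr 1; omega
  have e5 : 2 ^ (n - 5) = 2 * 2 ^ (n - 6) := by rw [← pow_succ']; congr 1; omega
  have e1 : 2 ^ (n - 1) = 16 * 2 ^ (n - 5) := by
    rw [show (16 : ℕ) = 2 ^ 4 by norm_num, ← pow_add]; congr 1; omega
  have e0 : 2 ^ n = 32 * 2 ^ (n - 5) := by
    rw [show (32 : ℕ) = 2 ^ 5 by norm_num, ← pow_add]; congr 1; omega
  have hnk : n * k ≤ 2 ^ (n - 9) := by rw [hk, mul_add]; omega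
  have hkk : k ≤ n * k := Nat.le_mul_of_pos_left _ (by omega)
  have hn1 : n ≤ n * 2 ^ (n / 2) := Nat.le_mul_of_pos_right _ (by positivity)
  have hpos : 0 < 2 ^ (n - 10) := by positivity
  refine (Finset.card_le_card (cover n hn k hk (by omega))).trans ?_
  refine (Finset.card_union_le _ _).trans ?_
  have hA := (Finset.card_image_le (f := fun A : Finset (V n) => A + A)
    (s := Finset.univ.filter (fun A : Finset (V n) => A.card ≤ 2 ^ (n - 5)))).trans
    (small_count (2 ^ (n - 5)) (by rw [hcardV, e0]))
  have hB := Finset.card_biUnion_le_card_mul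
    ((Finset.univ : Finset (V n)) ×ˢ Finset.powersetCard k (Finset.univ : Finset (V n)))
        (fun p => if (perp p.1 \ (p.2 + p.2)).card ≤ 2 ^ (n - 1) - 2 ^ (n - 7) then
          (perp p.1 \ (p.2 + p.2)).powerset.image
            (fun R => ((Finset.univ \ perp p.1) ∪ (p.2 + p.2)) ∪ R) else ∅)
    (2 ^ (2 ^ (n - 1) - 2 ^ (n - 7))) (by
      intro p _
      split_ifs with h
      · refine Finset.card_image_le.trans ?_
        rw [Finset.card_powerset]
        exact Nat.pow_le_pow_right (by norm_num) h
      · simp)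
  rw [Finset.card_product, Finset.card_powersetCard, Finset.card_univ, hcardV] at hB
  have hB2 : 2 ^ n * (2 ^ n).choose k * 2 ^ (2 ^ (n - 1) - 2 ^ (n - 7)) ≤
      2 ^ (2 ^ (n - 1) - 2 ^ (n - 9) - 1) := by
    calc _ ≤ 2 ^ n * (2 ^ n) ^ k * 2 ^ (2 ^ (n - 1) - 2 ^ (n - 7)) := by
          gcongr; exact Nat.choose_le_pow _ _
      _ = 2 ^ (n + n * k + (2 ^ (n - 1) - 2 ^ (n - 7))) := by rw [← pow_mul, ← pow_add, ← pow_add]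
      _ ≤ _ := Nat.pow_le_pow_right (by norm_num) (by omega)
  have hA2 : 2 ^ (7 * 2 ^ (n - 5)) ≤ 2 ^ (2 ^ (n - 1) - 2 ^ (n - 9) - 1) :=
    Nat.pow_le_pow_right (by norm_num) (by omega)
  have e : 2 ^ (2 ^ (n - 1) - 2 ^ (n - 9)) = 2 * 2 ^ (2 ^ (n - 1) - 2 ^ (n - 9) - 1) := by
    rw [← pow_succ']; congr 1; omega
  rw [e, two_mul]
  exact add_le_add (hA.trans hA2) (hB.trans hB2)

/-- There are `c > 0` and `n₀` with `|𝒮ₙ ∩ ℋ'ₙ| ≤ 2^(2^(n−1) − c·2ⁿ)` for all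
`n ≥ n₀`. -/
theorem count_sumsets_in_Hfam' :
    ∃ c : ℝ, 0 < c ∧ ∃ n₀ : ℕ, ∀ n : ℕ, n₀ ≤ n →
      (((sumsets n ∩ Hfam' n).card : ℝ)) ≤
        2 ^ (((2 ^ (n - 1) : ℕ) : ℝ) - c * 2 ^ n) := by
  refine ⟨1 / 512, by norm_num, 100, fun n hn => ?_⟩
  have h := nat_bound n hn
  have h1 : ((sumsets n ∩ Hfam' n).card : ℝ) ≤ (2 : ℝ) ^ (2 ^ (n - 1) - 2 ^ (n - 9)) := by
    exact_mod_cast h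
  refine h1.trans (le_of_eq ?_)
  rw [← Real.rpow_natCast]
  congr 1
  have hle : 2 ^ (n - 9) ≤ 2 ^ (n - 1) := Nat.pow_le_pow_right (by norm_num) (by omega)
  rw [Nat.cast_sub hle]
  congr 1
  have e : (2 : ℝ) ^ n = 512 * 2 ^ (n - 9) := by
    rw [show (512 : ℝ) = 2 ^ 9 by norm_num, ← pow_add]; congr 1; omega
  rw [e]
  push_cast
  ring
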